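/- arXiv:2101.04000 — 10 statements merged into one kernel-verified Lean document; each statement's English description precedes it below -/
import Mathlib

section
/- Let X be a Steiner loop satisfying the identity (x·z)·(((x·y)·z)·(y·z)) = ((x·z)·((x·y)·z))·(y·z) for all x, y, z ∈ X. Then for all x, y, z ∈ X, if x·(y·z) = (x·y)·z then x·(y·z) = y·(x·z). -/
/-!
Write `w = x·(y·z) = (x·y)·z`. A single instance of the identity, at `x, y, z`, suffices:
its left side is `(x·z)·(w·(y·z)) = (x·z)·x = z` and its right side is `((x·z)·w)·(y·z)`.
Multiplying by `y·z` gives `(x·z)·w = z·(y·z) = y`, that is `w = y·(x·z)`.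
-/

/-- A Steiner loop satisfying the identity
`(x·z)·(((x·y)·z)·(y·z)) = ((x·z)·((x·y)·z))·(y·z)` satisfies
`x·(y·z) = (x·y)·z → x·(y·z) = y·(x·z)`. -/
theorem stmt_0 {X : Type*} (mul : X → X → X) (one : X)
    (h_one_mul : ∀ x, mul one x = x)
    (h_mul_one : ∀ x, mul x one = x)
    (h_comm : ∀ x y, mul x y = mul y x)
    (h_inv : ∀ x y, mul x (mul x y) = y)
    (h_id : ∀ x y z, mul (mul x z) (mul (mul (mul x y) z) (mul y z)) =
      mul (mul (mul x z) (mul (mul x y) z)) (mul y z)) :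
    ∀ x y z, mul x (mul y z) = mul (mul x y) z →
      mul x (mul y z) = mul y (mul x z) := by
  intro x y z h
  have h_inv' : ∀ a b, mul (mul a b) b = a := fun a b => by
    rw [h_comm (mul a b) b, h_comm a b, h_inv]
  have key := h_id x y z
  -- The hypothesis gives `((x·y)·z)·(y·z) = x`, so the left side of the identity collapses to `z`.
  rw [← h, h_inv', h_comm (mul x z) x, h_inv] at key
  -- Multiplying `z = ((x·z)·(x·(y·z)))·(y·z)` by `y·z` isolates `y`.
  have hy : y = mul (mul x z) (mul x (mul y z)) := by
    calc y = mul z (mul y z) := by rw [h_comm z, h_inv']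
      _ = mul (mul (mul (mul x z) (mul x (mul y z))) (mul y z)) (mul y z) := by
        rw [← key]
      _ = _ := h_inv' _ _
  calc mul x (mul y z) = mul (mul x z) (mul (mul x z) (mul x (mul y z))) := (h_inv _ _).symm
    _ = mul (mul x z) y := by rw [← hy]
    _ = mul y (mul x z) := h_comm _ _
end

section
/- Let X be a Steiner loop in which the implication x·(y·z) = (x·y)·z ⟹ x·(y·z) = y·(x·z) holds for all x, y, z ∈ X. Then for all x, y, z ∈ X, if x·(y·z) = (x·y)·z then (x·y)·(y·z) = x·z. -/
/-!
Put `a = x·y`, `b = y·z`, `c = x·z`. If `x·b = a·z`, the hypothesis on associating triples gives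
`x·b = y·c` as well. Since `a·x = y` and `x·c = z`, this says that the triple `(a, x, c)` also
associates, so the hypothesis applies again and yields `a·z = x·(a·c)`. Hence `x·b = x·(a·c)`, so
`b = a·c` and `a·b = c`.
-/

/-- In a Steiner loop where `x·(y·z) = (x·y)·z → x·(y·z) = y·(x·z)`,
if `x·(y·z) = (x·y)·z` then `(x·y)·(y·z) = x·z`. -/
theorem stmt_1 {X : Type*} (mul : X → X → X) (one : X)
    (h_one_mul : ∀ x, mul one x = x)
    (h_mul_one : ∀ x, mul x one = x)
    (h_comm : ∀ x y, mul x y = mul y x)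
    (h_inv : ∀ x y, mul x (mul x y) = y)
    (h_good : ∀ x y z, mul x (mul y z) = mul (mul x y) z →
      mul x (mul y z) = mul y (mul x z)) :
    ∀ x y z, mul x (mul y z) = mul (mul x y) z →
      mul (mul x y) (mul y z) = mul x z := by
  intro x y z h
  have hyc : mul x (mul y z) = mul y (mul x z) := h_good x y z h
  have hax : mul (mul x y) x = y := by rw [h_comm, h_inv]
  -- The triple `(x·y, x, x·z)` associates.
  have hassoc : mul (mul x y) (mul x (mul x z)) = mul (mul (mul x y) x) (mul x z) := by
    rw [h_inv, hax, ← h, hyc]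
  have hac := h_good _ _ _ hassoc
  rw [h_inv, ← h] at hac
  have hb : mul y z = mul (mul x y) (mul x z) := by
    rw [← h_inv x (mul y z), hac, h_inv]
  rw [hb, h_inv]
end

section
/- Let X be a Steiner loop in which the implication x·(y·z) = (x·y)·z ⟹ x·(y·z) = y·(x·z) holds for all x, y, z ∈ X. Then for all x, y, z ∈ X with x·(y·z) = (x·y)·z, the set S = {1, x, y, z, x·y, y·z, x·z, x·(y·z)} is closed under the operation ·, i.e., for all a, b ∈ S one has a·b ∈ S. -/
/-!
Write `a = x·y`, `b = y·z`, `c = x·z`, `w = x·(y·z)`. The hypothesis `x·b = a·z` and the implication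
give `w = x·b = a·z = y·c`, so `S` multiplies like a (possibly degenerate) Fano plane with the
identity adjoined as soon as the seventh
line `a·b = c` is known. That line comes from applying the implication to the triple `(a, y, b)`,
which associates: `a·(y·b) = a·z = w = x·b = (a·y)·b`. It yields `w = y·(a·b)`, and
`w = y·c` then gives `a·b = c` by cancelling `y`.
-/

/-- In a Steiner loop where `x·(y·z) = (x·y)·z → x·(y·z) = y·(x·z)`,
if `x·(y·z) = (x·y)·z` then the set
`S = {1, x, y, z, x·y, y·z, x·z, x·(y·z)}` is closed under the operation. -/
theorem stmt_2 {X : Type*} (mul : X → X → X) (one : X)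
    (h_one_mul : ∀ x, mul one x = x)
    (h_mul_one : ∀ x, mul x one = x)
    (h_comm : ∀ x y, mul x y = mul y x)
    (h_inv : ∀ x y, mul x (mul x y) = y)
    (h_good : ∀ x y z, mul x (mul y z) = mul (mul x y) z →
      mul x (mul y z) = mul y (mul x z)) :
    ∀ x y z, mul x (mul y z) = mul (mul x y) z →
      ∀ a ∈ ({one, x, y, z, mul x y, mul y z, mul x z, mul x (mul y z)} : Set X),
      ∀ b ∈ ({one, x, y, z, mul x y, mul y z, mul x z, mul x (mul y z)} : Set X),
        mul a b ∈ ({one, x, y, z, mul x y, mul y z, mul x z, mul x (mul y z)} : Set X) := by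
  intro x y z hxyz
  have h_sq : ∀ u, mul u u = one := fun u => by simpa [h_mul_one] using h_inv u one
  -- Each line `{u, v, t}` is symmetric in its three points.
  have h_line : ∀ u v t, mul u v = t →
      mul u v = t ∧ mul v u = t ∧ mul u t = v ∧ mul t u = v ∧ mul v t = u ∧ mul t v = u := by
    rintro u v t rfl
    refine ⟨rfl, h_comm _ _, h_inv _ _, ?_, ?_, ?_⟩
    · rw [h_comm, h_inv]
    · rw [h_comm u v, h_inv]
    · rw [h_comm, h_comm u v, h_inv]
  have hyc := h_good x y z hxyz
  obtain ⟨a, ha⟩ : ∃ a, mul x y = a := ⟨_, rfl⟩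
  obtain ⟨b, hb⟩ : ∃ b, mul y z = b := ⟨_, rfl⟩
  obtain ⟨c, hc⟩ : ∃ c, mul x z = c := ⟨_, rfl⟩
  rw [ha, hb] at hxyz
  rw [hb, hc] at hyc
  rw [ha, hb, hc]
  obtain ⟨w, hw⟩ : ∃ w, mul x b = w := ⟨_, rfl⟩
  rw [hw] at hxyz hyc ⊢
  have la := h_line _ _ _ ha
  have lb := h_line _ _ _ hb
  have lc := h_line _ _ _ hc
  have lx := h_line _ _ _ hw
  have lz := h_line _ _ _ hxyz.symm
  have ly := h_line _ _ _ hyc.symm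
  have hab : mul a b = c := by
    have hyb : mul y b = z := lb.2.2.1
    have hay : mul a y = x := la.2.2.2.2.2
    have h := h_good a y b (by rw [hyb, hay, hw, hxyz])
    rw [hyb, ← hxyz] at h
    rw [← h_inv y (mul a b), ← h, hyc, h_inv]
  have l7 := h_line _ _ _ hab
  intro p hp q hq
  simp only [Set.mem_insert_iff, Set.mem_singleton_iff] at hp hq ⊢
  rcases hp with rfl | rfl | rfl | rfl | rfl | rfl | rfl | rfl <;>
    rcases hq with rfl | rfl | rfl | rfl | rfl | rfl | rfl | rfl <;>
    simp only [h_one_mul, h_mul_one, h_sq, la, lb, lc, lx, ly, lz, l7, true_or, or_true]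
end

section
/- Let X be a Steiner loop in which the implication x·(y·z) = (x·y)·z ⟹ x·(y·z) = y·(x·z) holds for all x, y, z ∈ X. Then for all x, y, z ∈ X with x·(y·z) = (x·y)·z, the operation · is associative on the set S = {1, x, y, z, x·y, y·z, x·z, x·(y·z)}, i.e., for all a, b, c ∈ S one has a·(b·c) = (a·b)·c. -/
/-!
Put `w = x·(y·z)`. The claim holds because `S` is a homomorphic image of the group `(ℤ/2)³`, the
seven nonidentity elements multiplying along the lines of the Fano plane. The products giving six
of the lines are immediate from the hypotheses: `x·y`, `y·z`, `x·z` by definition,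
`w = x·(y·z) = (x·y)·z` by assumption, and `w = y·(x·z)` by the given implication. For the seventh
line, `(x·y)·(y·z) = x·z`, observe that `(x·y, y, y·z)` is again an associative triple, since
`(x·y)·(y·(y·z)) = (x·y)·z = w = x·(y·z) = ((x·y)·y)·(y·z)`. The given implication applied to it
yields `w = y·((x·y)·(y·z))`, and cancelling `y` against `w = y·(x·z)` gives the claim.
-/

/-- The candidate homomorphism from `(ℤ/2)³`, written as `Bool³` with `xor`, sending the nonzero
vectors to seven given elements, labelled by their supports. -/
def cubeMap {X : Type*} (one x y z xy yz xz w : X) : Bool → Bool → Bool → X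
  | false, false, false => one
  | true, false, false => x
  | false, true, false => y
  | false, false, true => z
  | true, true, false => xy
  | false, true, true => yz
  | true, false, true => xz
  | true, true, true => w

/-- In a Steiner loop, seven elements multiplying along the lines of the Fano plane define a
homomorphism from `(ℤ/2)³`. -/
theorem cubeMap_mul {X : Type*} (mul : X → X → X) (one : X)
    (h_one_mul : ∀ x, mul one x = x)
    (h_mul_one : ∀ x, mul x one = x)
    (h_comm : ∀ x y, mul x y = mul y x)
    (h_inv : ∀ x y, mul x (mul x y) = y)
    {x y z xy yz xz w : X}
    (l₁ : mul x y = xy) (l₂ : mul y z = yz) (l₃ : mul x z = xz) (l₄ : mul x yz = w)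
    (l₅ : mul xy z = w) (l₆ : mul y xz = w) (l₇ : mul xy yz = xz)
    (a b c a₂ b₂ c₂ : Bool) :
    mul (cubeMap one x y z xy yz xz w a b c) (cubeMap one x y z xy yz xz w a₂ b₂ c₂) =
      cubeMap one x y z xy yz xz w (a ^^ a₂) (b ^^ b₂) (c ^^ c₂) := by
  have h_sq : ∀ p, mul p p = one := fun p => by
    simpa only [h_mul_one] using h_inv p one
  -- A single product equation determines all six products along its line.
  have line : ∀ {p q r}, mul p q = r → mul p q = r ∧ mul q p = r ∧ mul p r = q ∧ mul r p = q ∧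
      mul q r = p ∧ mul r q = p := by
    rintro p q r rfl
    have h₁ := h_inv p q
    have h₂ : mul q (mul p q) = p := by rw [h_comm p q, h_inv]
    exact ⟨rfl, h_comm _ _, h₁, (h_comm _ _).trans h₁, h₂, (h_comm _ _).trans h₂⟩
  have k₁ := line l₁
  have k₂ := line l₂
  have k₃ := line l₃
  have k₄ := line l₄
  have k₅ := line l₅
  have k₆ := line l₆
  have k₇ := line l₇
  clear line l₁ l₂ l₃ l₄ l₅ l₆ l₇
  cases a <;> cases b <;> cases c <;> cases a₂ <;> cases b₂ <;> cases c₂ <;>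
    simp only [cubeMap, Bool.xor_false, Bool.xor_true, Bool.not_false, Bool.not_true,
      h_one_mul, h_mul_one, h_sq, k₁, k₂, k₃, k₄, k₅, k₆, k₇]

/-- In a Steiner loop where `x·(y·z) = (x·y)·z → x·(y·z) = y·(x·z)`,
if `x·(y·z) = (x·y)·z` then the operation is associative on
`S = {1, x, y, z, x·y, y·z, x·z, x·(y·z)}`. -/
theorem stmt_3 {X : Type*} (mul : X → X → X) (one : X)
    (h_one_mul : ∀ x, mul one x = x)
    (h_mul_one : ∀ x, mul x one = x)
    (h_comm : ∀ x y, mul x y = mul y x)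
    (h_inv : ∀ x y, mul x (mul x y) = y)
    (h_good : ∀ x y z, mul x (mul y z) = mul (mul x y) z →
      mul x (mul y z) = mul y (mul x z)) :
    ∀ x y z, mul x (mul y z) = mul (mul x y) z →
      ∀ a ∈ ({one, x, y, z, mul x y, mul y z, mul x z, mul x (mul y z)} : Set X),
      ∀ b ∈ ({one, x, y, z, mul x y, mul y z, mul x z, mul x (mul y z)} : Set X),
      ∀ c ∈ ({one, x, y, z, mul x y, mul y z, mul x z, mul x (mul y z)} : Set X),
        mul a (mul b c) = mul (mul a b) c := by
  intro x y z h
  have l₆ : mul y (mul x z) = mul x (mul y z) := (h_good x y z h).symm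
  have l₇ : mul (mul x y) (mul y z) = mul x z := by
    have e : mul (mul x y) y = x := by rw [h_comm, h_comm x y, h_inv]
    have h_y := h_good (mul x y) y (mul y z) (by rw [h_inv, e, h])
    rw [h_inv, ← h, ← l₆] at h_y
    -- Cancel `y` on the left.
    rw [← h_inv y (mul (mul x y) (mul y z)), ← h_y, h_inv]
  have hom := cubeMap_mul mul one h_one_mul h_mul_one h_comm h_inv
    (x := x) (y := y) (z := z) rfl rfl rfl rfl h.symm l₆ l₇
  have surj : ∀ a ∈ ({one, x, y, z, mul x y, mul y z, mul x z, mul x (mul y z)} : Set X),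
      ∃ i j k, cubeMap one x y z (mul x y) (mul y z) (mul x z) (mul x (mul y z)) i j k = a := by
    rintro a (rfl | rfl | rfl | rfl | rfl | rfl | rfl | rfl)
    exacts [⟨false, false, false, rfl⟩, ⟨true, false, false, rfl⟩, ⟨false, true, false, rfl⟩,
      ⟨false, false, true, rfl⟩, ⟨true, true, false, rfl⟩, ⟨false, true, true, rfl⟩,
      ⟨true, false, true, rfl⟩, ⟨true, true, true, rfl⟩]
  intro a ha b hb c hc
  obtain ⟨i, j, k, rfl⟩ := surj a ha
  obtain ⟨i₂, j₂, k₂, rfl⟩ := surj b hb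
  obtain ⟨i₃, j₃, k₃, rfl⟩ := surj c hc
  simp only [hom, Bool.xor_assoc]
end

section
/- There exists a Steiner loop X with exactly 10 elements that satisfies the identity (x·z)·(((x·y)·z)·(y·z)) = ((x·z)·((x·y)·z))·(y·z) for all x, y, z ∈ X, but does not satisfy the Moufang identity, i.e., there exist x, y, z ∈ X with x·(y·(x·z)) ≠ ((x·y)·x)·z. -/
/-!
The example is the Steiner loop of the affine plane of order 3, the Steiner triple system on
`ZMod 3 × ZMod 3` whose blocks are the lines, i.e. the triples of distinct points with sum `0`.

The identity says that `u = x·z`, `v = (x·y)·z`, `w = y·z` associate. When no product involved is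
degenerate, `u = -x - z`, `v = x + y - z`, `w = -y - z`, so `u + v + w = -3z = 0`: the three points
lie on one block and hence in a subgroup of order at most 4. The Moufang identity fails because a
commutative Moufang loop of exponent 2 is an elementary abelian 2-group, and 10 is not a power
of 2. Both facts, including the degenerate cases, are finite and are checked by evaluation.
-/

/-- The Steiner loop product on the affine plane of order 3 with an identity `none` adjoined:
a point times itself is `none`, and the product of two distinct points is the third point
`-(a + b)` of the line through them. -/
def affineSteinerMul :
    Option (ZMod 3 × ZMod 3) → Option (ZMod 3 × ZMod 3) → Option (ZMod 3 × ZMod 3)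
  | none, y => y
  | some a, none => some a
  | some a, some b => if a = b then none else some (-(a + b))

/-- There exists a Steiner loop with exactly 10 elements satisfying
`(x·z)·(((x·y)·z)·(y·z)) = ((x·z)·((x·y)·z))·(y·z)` which is not Moufang. -/
theorem stmt_5 :
    ∃ (X : Type) (mul : X → X → X) (one : X),
      Nat.card X = 10 ∧
      (∀ x, mul one x = x) ∧
      (∀ x, mul x one = x) ∧
      (∀ x y, mul x y = mul y x) ∧
      (∀ x y, mul x (mul x y) = y) ∧
      (∀ x y z, mul (mul x z) (mul (mul (mul x y) z) (mul y z)) =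
        mul (mul (mul x z) (mul (mul x y) z)) (mul y z)) ∧
      (∃ x y z, mul x (mul y (mul x z)) ≠ mul (mul (mul x y) x) z) := by
  refine ⟨Option (ZMod 3 × ZMod 3), affineSteinerMul, none, ?_, ?_, ?_, ?_, ?_, ?_, ?_⟩
  · simp
  · decide +kernel
  · decide +kernel
  · decide +kernel
  · decide +kernel
  · decide +kernel
  · decide +kernel
end

section
/- Let X be a Steiner loop satisfying the identity (x·z)·(((x·y)·z)·(y·z)) = ((x·z)·((x·y)·z))·(y·z) for all x, y, z ∈ X. Then for all x, y, z ∈ X with x·(y·z) = (x·y)·z, the set S = {1, x, y, z, x·y, y·z, x·z, x·(y·z)} is closed under the operation · and the operation · is associative on S (for all a, b, c ∈ S, a·(b·c) = (a·b)·c). -/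
/-!
Write `u = x·y`, `v = y·z`, `t = x·z`, `w = x·(y·z)`. The set `S` is `1` together with seven points,
and the claim is that these multiply like the points of the Fano plane (possibly degenerate), i.e. as
an elementary abelian group of order 8. In a Steiner loop a relation `a·b = c` holds under every
permutation of `a, b, c`, so each line of the plane amounts to one equation. Five lines hold by
definition and by the hypothesis `x·(y·z) = (x·y)·z`. The identity at `(x, y, z)` collapses to
`(t·w)·v = z`, which gives the sixth line `t·w = y`; the identity at `(u, z, x)` then collapses to
`y·(v·t) = x`, which gives the last line `v·t = u`. The resulting multiplication table yields closure
and associativity by inspection.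
-/

/-- In a Steiner loop, a product relation `a·b = c` holds under all permutations of `a, b, c`. -/
lemma steiner_line {X : Type*} {mul : X → X → X}
    (h_comm : ∀ x y, mul x y = mul y x) (h_inv : ∀ x y, mul x (mul x y) = y)
    {a b c : X} (h : mul a b = c) :
    mul a b = c ∧ mul b a = c ∧ mul a c = b ∧ mul c a = b ∧ mul b c = a ∧ mul c b = a := by
  have hac : mul a c = b := by rw [← h, h_inv]
  have hbc : mul b c = a := by rw [← h, h_comm a b, h_inv]
  exact ⟨h, h_comm b a ▸ h, hac, h_comm c a ▸ hac, hbc, h_comm c b ▸ hbc⟩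

/-- In a Steiner loop satisfying the identity
`(x·z)·(((x·y)·z)·(y·z)) = ((x·z)·((x·y)·z))·(y·z)`, if `x·(y·z) = (x·y)·z` then
`S = {1, x, y, z, x·y, y·z, x·z, x·(y·z)}` is closed under the operation and the
operation is associative on `S`. -/
theorem stmt_6 {X : Type*} (mul : X → X → X) (one : X)
    (h_one_mul : ∀ x, mul one x = x)
    (h_mul_one : ∀ x, mul x one = x)
    (h_comm : ∀ x y, mul x y = mul y x)
    (h_inv : ∀ x y, mul x (mul x y) = y)
    (h_id : ∀ x y z, mul (mul x z) (mul (mul (mul x y) z) (mul y z)) =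
      mul (mul (mul x z) (mul (mul x y) z)) (mul y z)) :
    ∀ x y z, mul x (mul y z) = mul (mul x y) z →
      (∀ a ∈ ({one, x, y, z, mul x y, mul y z, mul x z, mul x (mul y z)} : Set X),
       ∀ b ∈ ({one, x, y, z, mul x y, mul y z, mul x z, mul x (mul y z)} : Set X),
         mul a b ∈ ({one, x, y, z, mul x y, mul y z, mul x z, mul x (mul y z)} : Set X)) ∧
      (∀ a ∈ ({one, x, y, z, mul x y, mul y z, mul x z, mul x (mul y z)} : Set X),
       ∀ b ∈ ({one, x, y, z, mul x y, mul y z, mul x z, mul x (mul y z)} : Set X),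
       ∀ c ∈ ({one, x, y, z, mul x y, mul y z, mul x z, mul x (mul y z)} : Set X),
         mul a (mul b c) = mul (mul a b) c) := by
  intro x y z h
  have h_sq : ∀ a, mul a a = one := fun a => by simpa [h_mul_one] using h_inv a one
  have line := @steiner_line X mul h_comm h_inv
  obtain ⟨u, hu⟩ : ∃ u, mul x y = u := ⟨_, rfl⟩
  obtain ⟨v, hv⟩ : ∃ v, mul y z = v := ⟨_, rfl⟩
  obtain ⟨t, ht⟩ : ∃ t, mul x z = t := ⟨_, rfl⟩
  obtain ⟨w, hw⟩ : ∃ w, mul x v = w := ⟨_, rfl⟩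
  have huz : mul u z = w := by rw [← hw, ← hv, h, hu]
  obtain ⟨a1, a2, a3, a4, a5, a6⟩ := line hu
  obtain ⟨b1, b2, b3, b4, b5, b6⟩ := line hv
  obtain ⟨c1, c2, c3, c4, c5, c6⟩ := line ht
  obtain ⟨d1, d2, d3, d4, d5, d6⟩ := line hw
  obtain ⟨e1, e2, e3, e4, e5, e6⟩ := line huz
  have htw : mul t w = y := by
    have key := h_id x y z
    rw [ht, hu, huz, hv, d6, c4] at key
    rw [← (line key.symm).2.2.2.2.2, b5]
  obtain ⟨f1, f2, f3, f4, f5, f6⟩ := line htw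
  have hvt : mul v t = u := by
    have key := h_id u z x
    rw [a4, e1, d4, c2, b3, c5] at key
    rw [← (line key).2.2.1, a2]
  obtain ⟨g1, g2, g3, g4, g5, g6⟩ := line hvt
  simp only [hu, hv, ht, hw, Set.mem_insert_iff, Set.mem_singleton_iff]
  constructor
  · rintro a ha b hb
    rcases ha with ha | ha | ha | ha | ha | ha | ha | ha <;>
    rcases hb with hb | hb | hb | hb | hb | hb | hb | hb <;>
    simp only [ha, hb, h_one_mul, h_mul_one, h_sq, a1, a2, a3, a4, a5, a6, b1, b2, b3, b4, b5, b6, c1,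
      c2, c3, c4, c5, c6, d1, d2, d3, d4, d5, d6, e1, e2, e3, e4, e5, e6, f1, f2, f3, f4,
      f5, f6, g1, g2, g3, g4, g5, g6, true_or, or_true]
  · rintro a ha b hb c hc
    rcases ha with ha | ha | ha | ha | ha | ha | ha | ha <;>
    rcases hb with hb | hb | hb | hb | hb | hb | hb | hb <;>
    rcases hc with hc | hc | hc | hc | hc | hc | hc | hc <;>
    simp only [ha, hb, hc, h_one_mul, h_mul_one, h_sq, a1, a2, a3, a4, a5, a6, b1, b2, b3, b4, b5, b6,
      c1, c2, c3, c4, c5, c6, d1, d2, d3, d4, d5, d6, e1, e2, e3, e4, e5, e6, f1, f2, f3,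
      f4, f5, f6, g1, g2, g3, g4, g5, g6]
end

section
/- Let X be a Steiner loop satisfying the identity (x·z)·(((x·y)·z)·(y·z)) = ((x·z)·((x·y)·z))·(y·z) for all x, y, z ∈ X. Then for all x, y, z ∈ X with x·(y·z) = (x·y)·z, one has (x·z)·(x·(y·z)) = y. -/
/-- In a Steiner loop satisfying the identity
`(x·z)·(((x·y)·z)·(y·z)) = ((x·z)·((x·y)·z))·(y·z)`, if `x·(y·z) = (x·y)·z` then
`(x·z)·(x·(y·z)) = y`. -/
theorem stmt_8 {X : Type*} (mul : X → X → X) (one : X)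
    (h_one_mul : ∀ x, mul one x = x)
    (h_mul_one : ∀ x, mul x one = x)
    (h_comm : ∀ x y, mul x y = mul y x)
    (h_inv : ∀ x y, mul x (mul x y) = y)
    (h_id : ∀ x y z, mul (mul x z) (mul (mul (mul x y) z) (mul y z)) =
      mul (mul (mul x z) (mul (mul x y) z)) (mul y z)) :
    ∀ x y z, mul x (mul y z) = mul (mul x y) z →
      mul (mul x z) (mul x (mul y z)) = y := by
  intro x y z h
  -- Put `c = y·z` and `b = (x·y)·z = x·c`, so `b·c = x`. The left side of the identity collapses
  -- to `(x·z)·x = z`, leaving `z = ((x·z)·b)·c`; multiplying by `c` gives `(x·z)·b = z·c = y`.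
  have hid := h_id x y z
  rw [← h, h_comm (mul x (mul y z)) (mul y z), h_comm x (mul y z), h_inv, h_comm (mul x z) x,
    h_inv, h_comm (mul y z) x, h_comm x z, h_comm _ (mul y z)] at hid
  have hc : mul (mul y z) z = y := by rw [h_comm y z, h_comm (mul z y) z, h_inv]
  rw [h_comm x z, ← h_inv (mul y z) (mul (mul z x) (mul x (mul y z))), ← hid, hc]
end

section
/- Let X be a Steiner loop and let x, y, z ∈ X be distinct elements, all different from 1, with x·y ≠ z, such that x·(y·z) = (x·y)·z, x·(y·z) = y·(x·z), and (x·y)·(y·z) = x·z. Then the set S = {1, x, y, z, x·y, y·z, x·z, x·(y·z)} has exactly 8 elements, is closed under the operation ·, the operation · is associative on S, and a·a = 1 for every a ∈ S; that is, ⟨x, y, z⟩ is an elementary abelian 2-group of order 8. -/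
/-!
The three relations, together with the definitions of `x·y`, `y·z`, `x·z` and `x·(y·z)`, say that
the seven non-identity elements of `S` satisfy the seven line relations of the Fano plane. In a
Steiner loop a relation `u·v = w` determines all products among `u, v, w`, so the seven relations
give the full multiplication table of `S`. Hence the map `octet : 𝔽₂³ → X` sending
`(i, j, k)` to `xⁱ·(yʲ·zᵏ)` turns addition into multiplication (`octet_add`). The non-degeneracy
hypotheses say that its kernel is trivial (`octet_eq_one`), so it is injective, and its image is
`S` (`range_octet`). All four claims are transported from `𝔽₂³`.
-/

/-- The element `xⁱ·(yʲ·zᵏ)`, with exponents in `ZMod 2`. -/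
def octet {X : Type*} (mul : X → X → X) (one x y z : X) (v : ZMod 2 × ZMod 2 × ZMod 2) : X :=
  mul (if v.1 = 0 then one else x)
    (mul (if v.2.1 = 0 then one else y) (if v.2.2 = 0 then one else z))

/-- A quantifier over `𝔽₂³` unfolds into its eight instances. -/
lemma forall_cube (P : ZMod 2 × ZMod 2 × ZMod 2 → Prop) (h000 : P (0, 0, 0)) (h100 : P (1, 0, 0))
    (h010 : P (0, 1, 0)) (h001 : P (0, 0, 1)) (h110 : P (1, 1, 0)) (h011 : P (0, 1, 1))
    (h101 : P (1, 0, 1)) (h111 : P (1, 1, 1)) (v : ZMod 2 × ZMod 2 × ZMod 2) : P v := by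
  obtain ⟨i, j, k⟩ := v
  fin_cases i <;> fin_cases j <;> fin_cases k <;> assumption

section SteinerLoop

variable {X : Type*} {mul : X → X → X} {one : X}

/-- The product of two points of a block is the third point, whatever the order. -/
lemma block_products (h_comm : ∀ x y, mul x y = mul y x) (h_inv : ∀ x y, mul x (mul x y) = y)
    {u v w : X} (h : mul u v = w) :
    mul u v = w ∧ mul v u = w ∧ mul u w = v ∧ mul w u = v ∧ mul v w = u ∧ mul w v = u := by
  have huw : mul u w = v := by rw [← h, h_inv]
  have hvw : mul v w = u := by rw [← h, h_comm u v, h_inv]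
  exact ⟨h, h_comm u v ▸ h, huw, h_comm u w ▸ huw, hvw, h_comm v w ▸ hvw⟩

lemma mul_self_eq_one (h_mul_one : ∀ x, mul x one = x) (h_inv : ∀ x y, mul x (mul x y) = y)
    (u : X) : mul u u = one := by
  simpa only [h_mul_one] using h_inv u one

lemma eq_of_mul_eq_one (h_mul_one : ∀ x, mul x one = x) (h_inv : ∀ x y, mul x (mul x y) = y)
    {u v : X} (h : mul u v = one) : u = v := by
  rw [← h_inv u v, h, h_mul_one]

lemma range_octet (h_one_mul : ∀ x, mul one x = x) (h_mul_one : ∀ x, mul x one = x) (x y z : X) :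
    Set.range (octet mul one x y z) =
      {one, x, y, z, mul x y, mul y z, mul x z, mul x (mul y z)} := by
  ext a
  simp only [Set.mem_range, Set.mem_insert_iff, Set.mem_singleton_iff]
  constructor
  · rintro ⟨v, rfl⟩
    induction v using forall_cube <;> simp [octet, h_one_mul, h_mul_one]
  · rintro (rfl | rfl | rfl | rfl | rfl | rfl | rfl | rfl)
    · exact ⟨(0, 0, 0), by simp [octet, h_one_mul]⟩
    · exact ⟨(1, 0, 0), by simp [octet, h_mul_one]⟩
    · exact ⟨(0, 1, 0), by simp [octet, h_one_mul, h_mul_one]⟩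
    · exact ⟨(0, 0, 1), by simp [octet, h_one_mul]⟩
    · exact ⟨(1, 1, 0), by simp [octet, h_mul_one]⟩
    · exact ⟨(0, 1, 1), by simp [octet, h_one_mul]⟩
    · exact ⟨(1, 0, 1), by simp [octet, h_one_mul]⟩
    · exact ⟨(1, 1, 1), by simp [octet]⟩

/-- `octet` is a homomorphism: its multiplication table is that of the Fano plane. -/
lemma octet_add (h_one_mul : ∀ x, mul one x = x) (h_mul_one : ∀ x, mul x one = x)
    (h_comm : ∀ x y, mul x y = mul y x) (h_inv : ∀ x y, mul x (mul x y) = y) {x y z : X}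
    (h_assoc : mul x (mul y z) = mul (mul x y) z)
    (h_exch : mul x (mul y z) = mul y (mul x z))
    (h_fano : mul (mul x y) (mul y z) = mul x z) (u v : ZMod 2 × ZMod 2 × ZMod 2) :
    octet mul one x y z (u + v) = mul (octet mul one x y z u) (octet mul one x y z v) := by
  have hsq := mul_self_eq_one h_mul_one h_inv
  have h2 : (1 + 1 : ZMod 2) = 0 := rfl
  -- Naming the seven points makes every product a rewrite from a pair of atoms to an atom.
  obtain ⟨a, ha⟩ : ∃ a, mul x y = a := ⟨_, rfl⟩
  obtain ⟨b, hb⟩ : ∃ b, mul y z = b := ⟨_, rfl⟩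
  obtain ⟨c, hc⟩ : ∃ c, mul x z = c := ⟨_, rfl⟩
  obtain ⟨d, hd⟩ : ∃ d, mul x b = d := ⟨_, rfl⟩
  rw [ha, hb, hd] at h_assoc
  rw [hb, hc, hd] at h_exch
  rw [ha, hb, hc] at h_fano
  have l1 := block_products h_comm h_inv ha
  have l2 := block_products h_comm h_inv hb
  have l3 := block_products h_comm h_inv hc
  have l4 := block_products h_comm h_inv hd
  have l5 := block_products h_comm h_inv h_assoc.symm
  have l6 := block_products h_comm h_inv h_exch.symm
  have l7 := block_products h_comm h_inv h_fano
  induction u using forall_cube <;> induction v using forall_cube <;>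
    simp [octet, h2, h_one_mul, h_mul_one, hsq, l1, l2, l3, l4, l5, l6, l7]

/-- The kernel of `octet` is trivial. -/
lemma octet_eq_one (h_one_mul : ∀ x, mul one x = x) (h_mul_one : ∀ x, mul x one = x)
    (h_inv : ∀ x y, mul x (mul x y) = y) {x y z : X} (hxy : x ≠ y) (hxz : x ≠ z) (hyz : y ≠ z)
    (hx1 : x ≠ one) (hy1 : y ≠ one) (hz1 : z ≠ one) (hblock : mul x y ≠ z)
    (h_assoc : mul x (mul y z) = mul (mul x y) z) (v : ZMod 2 × ZMod 2 × ZMod 2)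
    (h : octet mul one x y z v = one) : v = 0 := by
  have key : ∀ {u w : X}, mul u w = one → u = w := eq_of_mul_eq_one h_mul_one h_inv
  induction v using forall_cube <;>
    simp only [octet, h_one_mul, h_mul_one, if_true, one_ne_zero, if_false] at h
  · rfl
  · exact absurd h hx1
  · exact absurd h hy1
  · exact absurd h hz1
  · exact absurd (key h) hxy
  · exact absurd (key h) hyz
  · exact absurd (key h) hxz
  · exact absurd (key (h_assoc ▸ h)) hblock

end SteinerLoop

/-- In a Steiner loop, if `x, y, z` are distinct non-identity
elements with `x·y ≠ z` such that `x·(y·z) = (x·y)·z`, `x·(y·z) = y·(x·z)` and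
`(x·y)·(y·z) = x·z`, then `S = {1, x, y, z, x·y, y·z, x·z, x·(y·z)}` has exactly
8 elements, is closed under the operation, the operation is associative on `S`,
and `a·a = 1` for every `a ∈ S`; i.e. `⟨x, y, z⟩` is an elementary abelian
2-group of order 8. -/
theorem stmt_11 {X : Type*} (mul : X → X → X) (one : X)
    (h_one_mul : ∀ x, mul one x = x)
    (h_mul_one : ∀ x, mul x one = x)
    (h_comm : ∀ x y, mul x y = mul y x)
    (h_inv : ∀ x y, mul x (mul x y) = y)
    (x y z : X) (hxy : x ≠ y) (hxz : x ≠ z) (hyz : y ≠ z)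
    (hx1 : x ≠ one) (hy1 : y ≠ one) (hz1 : z ≠ one) (hblock : mul x y ≠ z)
    (h_assoc : mul x (mul y z) = mul (mul x y) z)
    (h_exch : mul x (mul y z) = mul y (mul x z))
    (h_fano : mul (mul x y) (mul y z) = mul x z) :
    ({one, x, y, z, mul x y, mul y z, mul x z, mul x (mul y z)} : Set X).ncard = 8 ∧
    (∀ a ∈ ({one, x, y, z, mul x y, mul y z, mul x z, mul x (mul y z)} : Set X),
     ∀ b ∈ ({one, x, y, z, mul x y, mul y z, mul x z, mul x (mul y z)} : Set X),
       mul a b ∈ ({one, x, y, z, mul x y, mul y z, mul x z, mul x (mul y z)} : Set X)) ∧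
    (∀ a ∈ ({one, x, y, z, mul x y, mul y z, mul x z, mul x (mul y z)} : Set X),
     ∀ b ∈ ({one, x, y, z, mul x y, mul y z, mul x z, mul x (mul y z)} : Set X),
     ∀ c ∈ ({one, x, y, z, mul x y, mul y z, mul x z, mul x (mul y z)} : Set X),
       mul a (mul b c) = mul (mul a b) c) ∧
    (∀ a ∈ ({one, x, y, z, mul x y, mul y z, mul x z, mul x (mul y z)} : Set X),
       mul a a = one) := by
  have hadd := octet_add h_one_mul h_mul_one h_comm h_inv h_assoc h_exch h_fano
  have hsq := mul_self_eq_one h_mul_one h_inv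
  have hinj : Function.Injective (octet mul one x y z) := by
    intro u v huv
    have h0 : u + v = 0 :=
      octet_eq_one h_one_mul h_mul_one h_inv hxy hxz hyz hx1 hy1 hz1 hblock h_assoc _
        (by rw [hadd, huv, hsq])
    -- In characteristic two, `u + v = 0` means `u = v`.
    have h2 : ∀ u v : ZMod 2 × ZMod 2 × ZMod 2, u + v = 0 → u = v := by decide
    exact h2 u v h0
  rw [← range_octet h_one_mul h_mul_one x y z]
  refine ⟨?_, ?_, ?_, fun a _ => hsq a⟩
  · rw [← Set.image_univ, Set.ncard_image_of_injective _ hinj, Set.ncard_univ]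
    simp
  · rintro _ ⟨u, rfl⟩ _ ⟨v, rfl⟩
    exact ⟨u + v, hadd u v⟩
  · rintro _ ⟨u, rfl⟩ _ ⟨v, rfl⟩ _ ⟨w, rfl⟩
    rw [← hadd, ← hadd, ← hadd, ← hadd, add_assoc]
end

section
/- There exists a Steiner loop X with exactly 10 elements that satisfies both the identity (x·z)·(((x·y)·z)·(y·z)) = ((x·z)·((x·y)·z))·(y·z) and the identity (x·y)·(y·(x·z)) = x·(y·((x·y)·z)) for all x, y, z ∈ X, but does not satisfy the Moufang identity, i.e., there exist x, y, z ∈ X with x·(y·(x·z)) ≠ ((x·y)·x)·z. -/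
/-!
The unique Steiner triple system on 9 points is the affine plane over `ZMod 3`, whose triples are
its lines, i.e. the triples of distinct points with sum `0`. Adjoining a unit `none` to its points
gives a Steiner loop with 10 elements: distinct points `a`, `b` multiply to the third point
`-(a + b)` of their line, and every element squares to the unit. The identities are then
a finite verification, and three non-collinear points violate the Moufang identity.
-/

/-- Multiplication of the Steiner loop of the affine plane over `ZMod 3`; `none` is the unit. -/
def planeMul : Option (ZMod 3 × ZMod 3) → Option (ZMod 3 × ZMod 3) → Option (ZMod 3 × ZMod 3)
  | none, y => y
  | x, none => x
  | some a, some b => if a = b then none else some (-(a + b))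

/-- There exists a Steiner loop with exactly 10 elements
satisfying both `(x·z)·(((x·y)·z)·(y·z)) = ((x·z)·((x·y)·z))·(y·z)` and
`(x·y)·(y·(x·z)) = x·(y·((x·y)·z))` which is not Moufang. -/
theorem stmt_13 :
    ∃ (X : Type) (mul : X → X → X) (one : X),
      Nat.card X = 10 ∧
      (∀ x, mul one x = x) ∧
      (∀ x, mul x one = x) ∧
      (∀ x y, mul x y = mul y x) ∧
      (∀ x y, mul x (mul x y) = y) ∧
      (∀ x y z, mul (mul x z) (mul (mul (mul x y) z) (mul y z)) =
        mul (mul (mul x z) (mul (mul x y) z)) (mul y z)) ∧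
      (∀ x y z, mul (mul x y) (mul y (mul x z)) =
        mul x (mul y (mul (mul x y) z))) ∧
      (∃ x y z, mul x (mul y (mul x z)) ≠ mul (mul (mul x y) x) z) := by
  refine ⟨Option (ZMod 3 × ZMod 3), planeMul, none, ?_, ?_, ?_, ?_, ?_, ?_, ?_, ?_⟩
  · simp [Nat.card_eq_fintype_card]
  · decide
  · decide
  · decide +kernel
  · decide +kernel
  · decide +kernel
  · decide +kernel
  · exact ⟨some (0, 0), some (1, 0), some (0, 1), by decide⟩
end

section
/- Let X be a Steiner loop satisfying the identity (x·z)·(((x·y)·z)·(y·z)) = ((x·z)·((x·y)·z))·(y·z) for all x, y, z ∈ X. Then for all x, y, z ∈ X, if x·(y·z) = (x·y)·z then (x·y)·(y·z) = x·z. -/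
/-!
Call `(x, y, z)` associating if `x(yz) = (xy)z`. For such a triple the identity collapses to
`z = ((xz)·x(yz))·(yz)`, which says that `y(xz) = x(yz)` as well (`key` below). If `(x, y, z)` is
associating then so is `(x, xy, z)`, both products being `yz`; `key` applied to this second triple
gives `(xy)(xz) = yz`, which is equivalent to the claim.
-/

/-- In a Steiner loop satisfying the identity
`(x·z)·(((x·y)·z)·(y·z)) = ((x·z)·((x·y)·z))·(y·z)`, if `x·(y·z) = (x·y)·z` then
`(x·y)·(y·z) = x·z`. -/
theorem stmt_14 {X : Type*} (mul : X → X → X) (one : X)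
    (h_one_mul : ∀ x, mul one x = x)
    (h_mul_one : ∀ x, mul x one = x)
    (h_comm : ∀ x y, mul x y = mul y x)
    (h_inv : ∀ x y, mul x (mul x y) = y)
    (h_id : ∀ x y z, mul (mul x z) (mul (mul (mul x y) z) (mul y z)) =
      mul (mul (mul x z) (mul (mul x y) z)) (mul y z)) :
    ∀ x y z, mul x (mul y z) = mul (mul x y) z →
      mul (mul x y) (mul y z) = mul x z := by
  have h_right : ∀ p q, mul (mul p q) p = q := fun p q => by rw [h_comm, h_inv]
  have h_left : ∀ p q, mul (mul p q) q = p := fun p q => by rw [h_comm p q, h_right]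
  have key : ∀ x y z, mul x (mul y z) = mul (mul x y) z →
      mul y (mul x z) = mul x (mul y z) := by
    intro x y z h
    have e := h_id x y z
    rw [← h, h_left, h_right] at e
    -- Multiplying `z = ((xz)·x(yz))·(yz)` by `yz` turns the left side into `y`.
    have e' : y = mul (mul x z) (mul x (mul y z)) := by
      have := congrArg (fun t => mul t (mul y z)) e
      simpa only [h_left, h_comm z, h_right] using this
    calc mul y (mul x z) = mul (mul x z) y := h_comm _ _
      _ = mul (mul x z) (mul (mul x z) (mul x (mul y z))) := by rw [← e']
      _ = mul x (mul y z) := h_inv _ _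
  intro x y z h
  have k := key x (mul x y) z (by rw [← h, h_inv, h_inv])
  rw [← h, h_inv] at k
  rw [← k, h_inv]
end
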